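/- For every m > 0 there exist constants γ ≥ 1 and c > 0, depending only on m, such that for every k > 0, every natural number j, and every real u ≥ 0, one has g₊(u^m, (k'_j)^m) := (1/m)∫_{(k'_j)^m}^{u^m} z^{1/m−1}(z − (k'_j)^m)₊ dz ≤ γ·2^{cj}·((u^m − k̄_j^m)₊)^{1+1/m}, where t₊ := max(t,0) and the integral is taken to be 0 when u^m ≤ (k'_j)^m. -/

import Mathlib

/-!
On `[a, b]` the factor `(z - a)₊` is at most `b - a`, and the remaining power integrates
explicitly, so `g₊(b, a) ≤ b^(1/m) (b - a)`. To trade `b` for a multiple of `b - d`, where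
`0 ≤ d < a` is a lower level, note that `b / (b - d)` is nonincreasing in `b`: a bound
`a ≤ C (a - d)` at the endpoint `b = a` persists for all `b ≥ a`. For `a = (k'_j)^m` and
`d = k̄_j^m` the gap `a - d` is exactly `k^m / 2^(j+4)`, whereas `a ≤ k^m`, so `C = 2^(j+4)` works.
-/

open Set

/-- The function `g₊(b, a)` of the paper, with exponent `m`. The truncation `(z - a)₊` makes the
oriented integral vanish for `b ≤ a`, as the paper's convention requires. -/
noncomputable def gPlus (m b a : ℝ) : ℝ :=
  (1 / m) * ∫ z in a..b, z ^ (1 / m - 1) * max (z - a) 0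

/-- The De Giorgi level `k_j^m`, as a function of `K = k^m`. -/
noncomputable def deGiorgiLevel (K : ℝ) (j : ℕ) : ℝ :=
  K - K / 2 ^ (j + 1)

/-- The intermediate De Giorgi level `k̄_j^m`, as a function of `K = k^m`. -/
noncomputable def deGiorgiMidLevel (K : ℝ) (j : ℕ) : ℝ :=
  (deGiorgiLevel K j + deGiorgiLevel K (j + 1)) / 2

/-- The intermediate De Giorgi level `(k'_j)^m`, as a function of `K = k^m`; it lies between
`k̄_j^m` and `k_{j+1}^m`. -/
noncomputable def deGiorgiUpperMidLevel (K : ℝ) (j : ℕ) : ℝ :=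
  (deGiorgiMidLevel K j + deGiorgiLevel K (j + 1)) / 2

section GPlus

variable {m a b : ℝ}

theorem gPlus_eq_zero_of_le (hba : b ≤ a) : gPlus m b a = 0 := by
  have integrand_eq_zero :
      EqOn (fun z ↦ z ^ (1 / m - 1) * max (z - a) 0) (fun _ ↦ 0) (uIcc a b) := by
    intro z hz
    rw [uIcc_of_ge hba] at hz
    simp [hz.2]
  rw [gPlus, intervalIntegral.integral_congr integrand_eq_zero, intervalIntegral.integral_zero,
    mul_zero]

theorem one_div_mul_integral_rpow_one_div_sub_one (hm : 0 < m) :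
    (1 / m) * ∫ z in a..b, z ^ (1 / m - 1) = b ^ (1 / m) - a ^ (1 / m) := by
  have hm' : 0 < 1 / m := one_div_pos.mpr hm
  rw [integral_rpow (Or.inl (by linarith)), sub_add_cancel, mul_div_cancel₀ _ hm'.ne']

theorem gPlus_le_rpow_mul_sub (hm : 0 < m) (ha : 0 ≤ a) (hab : a ≤ b) :
    gPlus m b a ≤ b ^ (1 / m) * (b - a) := by
  have hm' : 0 < 1 / m := one_div_pos.mpr hm
  have rpow_integrable :
      IntervalIntegrable (fun z : ℝ ↦ z ^ (1 / m - 1)) MeasureTheory.volume a b :=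
    intervalIntegral.intervalIntegrable_rpow' (by linarith)
  have integral_le : ∫ z in a..b, z ^ (1 / m - 1) * max (z - a) 0 ≤
      ∫ z in a..b, z ^ (1 / m - 1) * (b - a) := by
    refine intervalIntegral.integral_mono_on hab
      (rpow_integrable.mul_continuousOn (by fun_prop)) (rpow_integrable.mul_const _) ?_
    intro z hz
    have hz0 : 0 ≤ z := ha.trans hz.1
    gcongr
    exact max_le (sub_le_sub_right hz.2 a) (sub_nonneg.mpr hab)
  calc gPlus m b a
      ≤ (1 / m) * ∫ z in a..b, z ^ (1 / m - 1) * (b - a) :=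
        mul_le_mul_of_nonneg_left integral_le hm'.le
    _ = (b ^ (1 / m) - a ^ (1 / m)) * (b - a) := by
        rw [intervalIntegral.integral_mul_const, ← mul_assoc,
          one_div_mul_integral_rpow_one_div_sub_one hm]
    _ ≤ b ^ (1 / m) * (b - a) :=
        mul_le_mul_of_nonneg_right (sub_le_self _ (Real.rpow_nonneg ha _)) (sub_nonneg.mpr hab)

theorem gPlus_le_rpow_mul_max_rpow {d C : ℝ} (hm : 0 < m) (ha : 0 ≤ a) (hC : 1 ≤ C)
    (had : a ≤ C * (a - d)) :
    gPlus m b a ≤ C ^ (1 / m) * (max (b - d) 0) ^ (1 + 1 / m) := by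
  have hC0 : 0 < C := zero_lt_one.trans_le hC
  rcases le_total b a with hba | hab
  · rw [gPlus_eq_zero_of_le hba]
    positivity
  have hda : d ≤ a := sub_nonneg.mp (nonneg_of_mul_nonneg_right (ha.trans had) hC0)
  have hbd : 0 ≤ b - d := sub_nonneg.mpr (hda.trans hab)
  have b_le : b ≤ C * (b - d) := by
    linarith [le_mul_of_one_le_left (sub_nonneg.mpr hab) hC]
  calc gPlus m b a
      ≤ b ^ (1 / m) * (b - a) := gPlus_le_rpow_mul_sub hm ha hab
    _ ≤ (C * (b - d)) ^ (1 / m) * (b - d) := by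
        have hb : 0 ≤ b := ha.trans hab
        gcongr
    _ = C ^ (1 / m) * (b - d) ^ (1 + 1 / m) := by
        rw [Real.mul_rpow hC0.le hbd, Real.rpow_one_add' hbd (by positivity)]
        ring
    _ = C ^ (1 / m) * (max (b - d) 0) ^ (1 + 1 / m) := by rw [max_eq_left hbd]

end GPlus

section Levels

variable {K : ℝ}

theorem deGiorgiLevel_nonneg (hK : 0 ≤ K) (j : ℕ) : 0 ≤ deGiorgiLevel K j :=
  sub_nonneg.mpr (div_le_self hK (one_le_pow₀ one_le_two))

theorem deGiorgiLevel_le (hK : 0 ≤ K) (j : ℕ) : deGiorgiLevel K j ≤ K :=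
  sub_le_self K (by positivity)

theorem deGiorgiUpperMidLevel_nonneg (hK : 0 ≤ K) (j : ℕ) : 0 ≤ deGiorgiUpperMidLevel K j := by
  unfold deGiorgiUpperMidLevel deGiorgiMidLevel
  linarith [deGiorgiLevel_nonneg hK j, deGiorgiLevel_nonneg hK (j + 1)]

theorem deGiorgiUpperMidLevel_le (hK : 0 ≤ K) (j : ℕ) : deGiorgiUpperMidLevel K j ≤ K := by
  unfold deGiorgiUpperMidLevel deGiorgiMidLevel
  linarith [deGiorgiLevel_le hK j, deGiorgiLevel_le hK (j + 1)]

theorem deGiorgiUpperMidLevel_sub_deGiorgiMidLevel (K : ℝ) (j : ℕ) :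
    deGiorgiUpperMidLevel K j - deGiorgiMidLevel K j = K / 2 ^ (j + 4) := by
  unfold deGiorgiUpperMidLevel deGiorgiMidLevel deGiorgiLevel
  field_simp
  ring

theorem deGiorgiUpperMidLevel_le_two_pow_mul_sub (hK : 0 ≤ K) (j : ℕ) :
    deGiorgiUpperMidLevel K j ≤
      2 ^ (j + 4) * (deGiorgiUpperMidLevel K j - deGiorgiMidLevel K j) := by
  rw [deGiorgiUpperMidLevel_sub_deGiorgiMidLevel, mul_div_cancel₀ _ (by positivity)]
  exact deGiorgiUpperMidLevel_le hK j

end Levels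

theorem pow_add_rpow {x : ℝ} (hx : 0 ≤ x) (j n : ℕ) (p : ℝ) :
    (x ^ (j + n)) ^ p = (x ^ n) ^ p * x ^ (p * j) := by
  rw [pow_add, Real.mul_rpow (pow_nonneg hx j) (pow_nonneg hx n), mul_comm p,
    Real.rpow_natCast_mul hx, mul_comm]

/-- Estimate (3.2): for `m > 0` there exist `γ ≥ 1` and `c > 0` depending only
on `m` such that for every `k > 0`, `j ∈ ℕ` and `u ≥ 0`,
`g₊(u^m, (k'_j)^m) = (1/m)∫_{(k'_j)^m}^{u^m} z^(1/m-1)(z-(k'_j)^m)₊ dz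
  ≤ γ 2^(cj) ((u^m - k̄_j^m)₊)^(1+1/m)`
(the integral being `0` when `u^m ≤ (k'_j)^m`). -/
theorem g_plus_upper_bound_levels (m : ℝ) (hm : 0 < m) :
    ∃ γ c : ℝ, 1 ≤ γ ∧ 0 < c ∧
      ∀ k : ℝ, 0 < k → ∀ j : ℕ, ∀ u : ℝ, 0 ≤ u →
      ∀ kjm kj1m kbm kpm : ℝ,
        kjm = k ^ m - k ^ m / 2 ^ (j + 1) →
        kj1m = k ^ m - k ^ m / 2 ^ (j + 2) →
        kbm = (kjm + kj1m) / 2 →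
        kpm = (kbm + kj1m) / 2 →
        (1 / m) * ∫ z in kpm..(u ^ m), z ^ (1 / m - 1) * max (z - kpm) 0 ≤
          γ * (2 : ℝ) ^ (c * (j : ℝ)) * (max (u ^ m - kbm) 0) ^ (1 + 1 / m) := by
  have hm' : 0 < 1 / m := one_div_pos.mpr hm
  refine ⟨(2 ^ 4) ^ (1 / m), 1 / m, Real.one_le_rpow (by norm_num) hm'.le, hm', ?_⟩
  rintro k hk j u _ _ _ _ _ rfl rfl rfl rfl
  have hK : 0 ≤ k ^ m := Real.rpow_nonneg hk.le m
  change gPlus m (u ^ m) (deGiorgiUpperMidLevel (k ^ m) j) ≤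
    _ * (max (u ^ m - deGiorgiMidLevel (k ^ m) j) 0) ^ (1 + 1 / m)
  rw [← pow_add_rpow zero_le_two]
  exact gPlus_le_rpow_mul_max_rpow hm (deGiorgiUpperMidLevel_nonneg hK j)
    (one_le_pow₀ one_le_two) (deGiorgiUpperMidLevel_le_two_pow_mul_sub hK j)
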